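/- Let A₁, …, A_m be real symmetric n×n matrices. Then 2 Σ_{1≤i<j≤m} ‖[A_i,A_j]‖² ≤ (3/2)(Σ_{i=1}^m ‖A_i‖²)² − Σ_{i=1}^m ‖A_i‖⁴. (This is the Li–Li inequality P′(n,m).) -/

import Mathlib

open Matrix BigOperators

/-- Frobenius norm squared of a real `n × n` matrix: the sum of the squares of all entries. -/
noncomputable def frobSq {n : ℕ} (A : Matrix (Fin n) (Fin n) ℝ) : ℝ :=
  ∑ i, ∑ j, (A i j) ^ 2

/-- The commutator `[A, B] = A * B - B * A`. -/
def mcomm {n : ℕ} (A B : Matrix (Fin n) (Fin n) ℝ) : Matrix (Fin n) (Fin n) ℝ :=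
  A * B - B * A

/-!
Bombieri's inequality `∑ |⟪vᵢ, x⟫|² ≤ max_i (∑ⱼ |⟪vᵢ, vⱼ⟫|) ‖x‖²` is used twice. For the vectors
`e_a - e_b` attached to the edges of a graph it bounds the Laplacian, and gives
`∑ᵢⱼ max (|xᵢ - xⱼ|² - ‖x‖²) 0 ≤ 2 ‖x‖²`. For orthogonal symmetric matrices `B_k`, tested against
`E_ij + E_ji`, it gives `2 ∑ₖ B_k(i, j)² ≤ M` for `i ≠ j`, where `M = max ‖B_k‖²`. After
diagonalizing a symmetric `A`, these two bounds combine to Lu's inequality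
`∑ₖ ‖[A, B_k]‖² ≤ ‖A‖² (∑ₖ ‖B_k‖² + M)`.

An orthogonal change of the family `A₁, …, A_m` preserves `∑ ‖A_i‖²` and `∑ ‖[A_i, A_j]‖²`, and the
one diagonalizing its Gram matrix makes the family orthogonal without decreasing `∑ ‖A_i‖⁴`. So one
may assume orthogonality, apply Lu's inequality to each `A_i` against the others, and sum: with
`a_i = ‖A_i‖²`, the total excess `∑ᵢ a_i max_{j ≠ i} a_j` is at most `(∑ a_i)² / 2`.
-/

open RCLike
open scoped InnerProductSpace Matrix.Norms.Frobenius

section AlmostOrthogonal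

variable {𝕜 E ι : Type*} [RCLike 𝕜] [SeminormedAddCommGroup E] [InnerProductSpace 𝕜 E]
  {s : Finset ι} {v : ι → E} {C : ℝ}

/- Schur's test for the Gram matrix of `v`. -/
theorem norm_sum_smul_sq_le (hC : ∀ i ∈ s, ∑ j ∈ s, ‖⟪v i, v j⟫_𝕜‖ ≤ C) (c : ι → 𝕜) :
    ‖∑ i ∈ s, c i • v i‖ ^ 2 ≤ C * ∑ i ∈ s, ‖c i‖ ^ 2 := by
  have expand : ‖∑ i ∈ s, c i • v i‖ ^ 2 ≤
      ∑ i ∈ s, ∑ j ∈ s, ‖c i‖ * ‖c j‖ * ‖⟪v i, v j⟫_𝕜‖ := by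
    rw [← inner_self_eq_norm_sq (𝕜 := 𝕜), inner_self_re_eq_norm, sum_inner]
    simp only [inner_sum, inner_smul_left, inner_smul_right]
    refine norm_sum_le_of_le _ fun i _ => norm_sum_le_of_le _ fun j _ => ?_
    simp [mul_assoc, mul_left_comm]
  have transpose : ∑ i ∈ s, ∑ j ∈ s, ‖c j‖ ^ 2 * ‖⟪v i, v j⟫_𝕜‖ =
      ∑ i ∈ s, ∑ j ∈ s, ‖c i‖ ^ 2 * ‖⟪v i, v j⟫_𝕜‖ := by
    rw [Finset.sum_comm]
    simp only [norm_inner_symm]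
  calc ‖∑ i ∈ s, c i • v i‖ ^ 2
      ≤ ∑ i ∈ s, ∑ j ∈ s, ‖c i‖ * ‖c j‖ * ‖⟪v i, v j⟫_𝕜‖ := expand
    _ ≤ ∑ i ∈ s, ∑ j ∈ s, (‖c i‖ ^ 2 + ‖c j‖ ^ 2) / 2 * ‖⟪v i, v j⟫_𝕜‖ := by
        gcongr with i _ j _
        linarith [two_mul_le_add_sq ‖c i‖ ‖c j‖]
    _ = ∑ i ∈ s, ‖c i‖ ^ 2 * ∑ j ∈ s, ‖⟪v i, v j⟫_𝕜‖ := by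
        simp only [add_div, add_mul, Finset.sum_add_distrib, div_mul_eq_mul_div,
          ← Finset.sum_div, transpose, add_halves, Finset.mul_sum]
    _ ≤ ∑ i ∈ s, ‖c i‖ ^ 2 * C := by
        gcongr with i hi
        exact hC i hi
    _ = C * ∑ i ∈ s, ‖c i‖ ^ 2 := by rw [← Finset.sum_mul, mul_comm]

theorem bombieri_inequality (hC₀ : 0 ≤ C) (hC : ∀ i ∈ s, ∑ j ∈ s, ‖⟪v i, v j⟫_𝕜‖ ≤ C) (x : E) :
    ∑ i ∈ s, ‖⟪v i, x⟫_𝕜‖ ^ 2 ≤ C * ‖x‖ ^ 2 := by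
  set N := ∑ i ∈ s, ‖⟪v i, x⟫_𝕜‖ ^ 2
  set w := ∑ i ∈ s, ⟪v i, x⟫_𝕜 • v i
  have norm_inner_w : ‖⟪w, x⟫_𝕜‖ = N := by
    have : ⟪w, x⟫_𝕜 = (N : 𝕜) := by
      simp only [w, N, sum_inner, inner_smul_left, RCLike.conj_mul, map_sum, map_pow]
    rw [this, norm_ofReal, abs_of_nonneg (by positivity)]
  have cauchy_schwarz : N ^ 2 ≤ (C * N) * ‖x‖ ^ 2 := calc
    N ^ 2 ≤ (‖w‖ * ‖x‖) ^ 2 := by rw [← norm_inner_w]; gcongr; exact norm_inner_le_norm w x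
    _ = ‖w‖ ^ 2 * ‖x‖ ^ 2 := mul_pow ..
    _ ≤ (C * N) * ‖x‖ ^ 2 := by gcongr; exact norm_sum_smul_sq_le hC _
  rcases (show 0 ≤ N by positivity).eq_or_lt with hN | hN
  · rw [← hN]; positivity
  · exact le_of_mul_le_mul_right (by linarith) hN

theorem sum_norm_inner_sq_le_of_pairwise_orthogonal [Fintype ι] (hC₀ : 0 ≤ C)
    (hv : Pairwise fun i j => ⟪v i, v j⟫_𝕜 = 0) (hC : ∀ i, ‖v i‖ ^ 2 ≤ C) (x : E) :
    ∑ i, ‖⟪v i, x⟫_𝕜‖ ^ 2 ≤ C * ‖x‖ ^ 2 := by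
  refine bombieri_inequality hC₀ (fun i _ => ?_) x
  rw [Fintype.sum_eq_single i fun j hj => by rw [hv hj.symm, norm_zero],
    ← inner_self_re_eq_norm, inner_self_eq_norm_sq]
  exact hC i

end AlmostOrthogonal

section EdgeDifferences

variable {𝕜 V : Type*} [RCLike 𝕜] [Fintype V]

open EuclideanSpace in
theorem norm_inner_single_sub_single_le [DecidableEq V] (e f : V × V) :
    ‖⟪single e.1 (1 : 𝕜) - single e.2 1, single f.1 (1 : 𝕜) - single f.2 1⟫_𝕜‖ ≤
      1 + (if f = e then 1 else 0) + (if f = e.swap then 1 else 0) := by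
  obtain ⟨a, b⟩ := e
  obtain ⟨c, d⟩ := f
  have inner_eq : ⟪single a (1 : 𝕜) - single b 1, single c (1 : 𝕜) - single d 1⟫_𝕜 =
      (((if a = c then 1 else 0) - (if b = c then 1 else 0) -
        ((if a = d then 1 else 0) - (if b = d then 1 else 0)) : ℝ) : 𝕜) := by
    simp [inner_sub_left, inner_sub_right, inner_single_left, PiLp.single_apply]
  rw [inner_eq, norm_ofReal, abs_le]
  grind

/- With both orientations of every edge in `E`, this says that the Laplacian of a graph with `e`
edges has largest eigenvalue at most `e + 1`. -/
theorem sum_norm_sub_sq_le (E : Finset (V × V)) (x : EuclideanSpace 𝕜 V) :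
    ∑ e ∈ E, ‖x e.1 - x e.2‖ ^ 2 ≤ (E.card + 2) * ‖x‖ ^ 2 := by
  classical
  let v (e : V × V) : EuclideanSpace 𝕜 V :=
    EuclideanSpace.single e.1 1 - EuclideanSpace.single e.2 1
  have inner_v (e : V × V) : ⟪v e, x⟫_𝕜 = x e.1 - x e.2 := by
    simp [v, inner_sub_left, EuclideanSpace.inner_single_left]
  have rowSum (e : V × V) : ∑ f ∈ E, ‖⟪v e, v f⟫_𝕜‖ ≤ E.card + 2 := calc
    ∑ f ∈ E, ‖⟪v e, v f⟫_𝕜‖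
      ≤ ∑ f ∈ E, (1 + (if f = e then 1 else 0) + (if f = e.swap then 1 else 0) : ℝ) :=
        Finset.sum_le_sum fun f _ => norm_inner_single_sub_single_le e f
    _ = E.card + (if e ∈ E then 1 else 0) + (if e.swap ∈ E then 1 else 0) := by
        simp [Finset.sum_add_distrib]
    _ ≤ E.card + 2 := by split_ifs <;> linarith
  simpa only [inner_v] using bombieri_inequality (by positivity) (fun e _ => rowSum e) x

theorem sum_max_norm_sub_sq_sub_le (x : EuclideanSpace 𝕜 V) :
    ∑ i, ∑ j, max (‖x i - x j‖ ^ 2 - ‖x‖ ^ 2) 0 ≤ 2 * ‖x‖ ^ 2 := by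
  classical
  let E : Finset (V × V) := {e | ‖x‖ ^ 2 < ‖x e.1 - x e.2‖ ^ 2}
  calc ∑ i, ∑ j, max (‖x i - x j‖ ^ 2 - ‖x‖ ^ 2) 0
      = ∑ e ∈ E, (‖x e.1 - x e.2‖ ^ 2 - ‖x‖ ^ 2) := by
        simp only [E, Finset.sum_filter, Fintype.sum_prod_type, ← sub_pos (b := ‖x‖ ^ 2)]
        simp only [max_def_lt']
    _ = ∑ e ∈ E, ‖x e.1 - x e.2‖ ^ 2 - E.card * ‖x‖ ^ 2 := by
        rw [Finset.sum_sub_distrib, Finset.sum_const, nsmul_eq_mul]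
    _ ≤ 2 * ‖x‖ ^ 2 := by linarith [sum_norm_sub_sq_le E x]

end EdgeDifferences

theorem frobenius_norm_sq_eq_sum {α m n : Type*} [SeminormedAddCommGroup α] [Fintype m] [Fintype n]
    (A : Matrix m n α) : ‖A‖ ^ 2 = ∑ i, ∑ j, ‖A i j‖ ^ 2 := by
  rw [frobenius_norm_def, ← Real.rpow_natCast, ← Real.rpow_mul (by positivity)]
  simp

/-- The inner product `⟪A, B⟫ = tr (B Aᴴ)`, which induces the Frobenius norm. -/
noncomputable local instance frobeniusInnerProductSpace {𝕜 m n : Type*} [RCLike 𝕜] [Fintype m]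
    [Fintype n] : InnerProductSpace 𝕜 (Matrix m n 𝕜) where
  inner A B := (B * Aᴴ).trace
  norm_sq_eq_re_inner A := by
    simp only [frobenius_norm_sq_eq_sum, trace, diag_apply, mul_apply, conjTranspose_apply,
      star_def, RCLike.mul_conj, map_sum]
    norm_cast
  conj_inner_symm A B := by
    rw [starRingEnd_apply, ← trace_conjTranspose, conjTranspose_mul, conjTranspose_conjTranspose]
  add_left := by simp [Matrix.mul_add]
  smul_left := by simp

theorem trace_mul_mul_conjTranspose_of_isometry {R m n : Type*} [CommSemiring R] [StarRing R]
    [Fintype m] [Fintype n] [DecidableEq n] {Q : Matrix m n R} (hQ : Qᴴ * Q = 1)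
    (A : Matrix n n R) : (Q * A * Qᴴ).trace = A.trace := by
  rw [trace_mul_cycle, hQ, Matrix.one_mul]

section FrobeniusInner

variable {𝕜 m n : Type*} [RCLike 𝕜] [Fintype m] [Fintype n]

theorem frobenius_inner_eq_trace (A B : Matrix m n 𝕜) : ⟪A, B⟫_𝕜 = (B * Aᴴ).trace := rfl

theorem frobenius_inner_single [DecidableEq m] [DecidableEq n] (A : Matrix m n 𝕜) (i : m) (j : n)
    (c : 𝕜) : ⟪A, Matrix.single i j c⟫_𝕜 = c * star (A i j) := by
  simp [frobenius_inner_eq_trace, trace_single_mul]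

variable [DecidableEq n] {Q : Matrix m n 𝕜}

theorem frobenius_inner_mul_mul_conjTranspose_of_isometry (hQ : Qᴴ * Q = 1) (A B : Matrix n n 𝕜) :
    ⟪Q * A * Qᴴ, Q * B * Qᴴ⟫_𝕜 = ⟪A, B⟫_𝕜 := by
  have : Q * B * Qᴴ * (Q * A * Qᴴ)ᴴ = Q * (B * Aᴴ) * Qᴴ := calc
    _ = Q * B * (Qᴴ * Q) * Aᴴ * Qᴴ := by
      simp only [conjTranspose_mul, conjTranspose_conjTranspose, Matrix.mul_assoc]
    _ = Q * (B * Aᴴ) * Qᴴ := by rw [hQ, Matrix.mul_one, Matrix.mul_assoc Q]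
  rw [frobenius_inner_eq_trace, this, trace_mul_mul_conjTranspose_of_isometry hQ,
    frobenius_inner_eq_trace]

theorem frobenius_norm_mul_mul_conjTranspose_of_isometry (hQ : Qᴴ * Q = 1) (A : Matrix n n 𝕜) :
    ‖Q * A * Qᴴ‖ = ‖A‖ := by
  simp only [norm_eq_sqrt_re_inner (𝕜 := 𝕜), frobenius_inner_mul_mul_conjTranspose_of_isometry hQ]

theorem frobenius_norm_sq_lie_diagonal (x : n → 𝕜) (B : Matrix n n 𝕜) :
    ‖⁅diagonal x, B⁆‖ ^ 2 = ∑ i, ∑ j, ‖x i - x j‖ ^ 2 * ‖B i j‖ ^ 2 := by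
  have apply_eq (i j : n) : ⁅diagonal x, B⁆ i j = (x i - x j) * B i j := by
    rw [Ring.lie_def, Matrix.sub_apply, diagonal_mul, mul_diagonal]
    ring
  simp only [frobenius_norm_sq_eq_sum, apply_eq, norm_mul, mul_pow]

end FrobeniusInner

section RowCombination

variable {𝕜 E κ μ : Type*} [RCLike 𝕜] [SeminormedAddCommGroup E] [InnerProductSpace 𝕜 E]
  [Fintype κ]

/-- The family of linear combinations of `v` whose coefficients are the conjugated rows of `Q`.
The conjugation makes its Gram matrix `Q G Qᴴ`, where `G` is that of `v`. -/
def rowCombination (Q : Matrix μ κ 𝕜) (v : κ → E) (k : μ) : E :=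
  ∑ i, star (Q k i) • v i

theorem gram_rowCombination (Q : Matrix μ κ 𝕜) (v : κ → E) :
    gram 𝕜 (rowCombination Q v) = Q * gram 𝕜 v * Qᴴ := by
  ext k l
  simp only [gram_apply, rowCombination, sum_inner, inner_sum, inner_smul_left, inner_smul_right,
    mul_apply, conjTranspose_apply, Finset.sum_mul, star_def, RCLike.conj_conj]
  simp only [Finset.mul_sum]
  exact Finset.sum_congr rfl fun j _ => Finset.sum_congr rfl fun i _ => by ring

theorem trace_gram (v : κ → E) : (gram 𝕜 v).trace = ∑ i, (‖v i‖ : 𝕜) ^ 2 := by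
  simp [trace, inner_self_eq_norm_sq_to_K]

theorem sum_norm_pow_four_le_norm_gram_sq (v : κ → E) :
    ∑ i, ‖v i‖ ^ 4 ≤ ‖gram 𝕜 v‖ ^ 2 := by
  rw [frobenius_norm_sq_eq_sum]
  refine Finset.sum_le_sum fun i _ => ?_
  calc ‖v i‖ ^ 4 = ‖gram 𝕜 v i i‖ ^ 2 := by
        rw [gram_apply, ← inner_self_re_eq_norm, inner_self_eq_norm_sq, ← pow_mul]
    _ ≤ ∑ j, ‖gram 𝕜 v i j‖ ^ 2 :=
        Finset.single_le_sum (f := fun j => ‖gram 𝕜 v i j‖ ^ 2) (fun _ _ => by positivity)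
          (Finset.mem_univ i)

theorem norm_gram_sq_of_pairwise_orthogonal {v : κ → E}
    (hv : Pairwise fun i j => ⟪v i, v j⟫_𝕜 = 0) : ‖gram 𝕜 v‖ ^ 2 = ∑ i, ‖v i‖ ^ 4 := by
  rw [frobenius_norm_sq_eq_sum]
  refine Finset.sum_congr rfl fun i _ => ?_
  rw [Fintype.sum_eq_single i fun j hj => by simp [hv hj.symm], gram_apply,
    ← inner_self_re_eq_norm, inner_self_eq_norm_sq, ← pow_mul]

variable [Fintype μ] [DecidableEq κ]

theorem sum_norm_rowCombination_sq {Q : Matrix μ κ 𝕜} (hQ : Qᴴ * Q = 1) (v : κ → E) :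
    ∑ k, ‖rowCombination Q v k‖ ^ 2 = ∑ i, ‖v i‖ ^ 2 := by
  have := trace_mul_mul_conjTranspose_of_isometry hQ (gram 𝕜 v)
  rw [← gram_rowCombination, trace_gram, trace_gram] at this
  exact_mod_cast this

variable (𝕜) in
theorem exists_isometry_pairwise_orthogonal_rowCombination (v : κ → E) :
    ∃ Q : Matrix κ κ 𝕜, Qᴴ * Q = 1 ∧
      Pairwise fun k l => ⟪rowCombination Q v k, rowCombination Q v l⟫_𝕜 = 0 := by
  have hG := isHermitian_gram 𝕜 v
  refine ⟨star hG.eigenvectorUnitary, by simp [← star_eq_conjTranspose], fun k l hkl => ?_⟩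
  have diag := hG.conjStarAlgAut_star_eigenvectorUnitary
  rw [Unitary.conjStarAlgAut_apply, star_eq_conjTranspose, ← gram_rowCombination] at diag
  exact (congrFun₂ diag k l).trans (diagonal_apply_ne _ hkl)

theorem sum_norm_pow_four_le_of_pairwise_orthogonal_rowCombination {Q : Matrix μ κ 𝕜} {v : κ → E}
    (hQ : Qᴴ * Q = 1)
    (orth : Pairwise fun k l => ⟪rowCombination Q v k, rowCombination Q v l⟫_𝕜 = 0) :
    ∑ i, ‖v i‖ ^ 4 ≤ ∑ k, ‖rowCombination Q v k‖ ^ 4 := calc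
  ∑ i, ‖v i‖ ^ 4 ≤ ‖gram 𝕜 v‖ ^ 2 := sum_norm_pow_four_le_norm_gram_sq v
  _ = ‖gram 𝕜 (rowCombination Q v)‖ ^ 2 := by
    rw [gram_rowCombination, frobenius_norm_mul_mul_conjTranspose_of_isometry hQ]
  _ = ∑ k, ‖rowCombination Q v k‖ ^ 4 := norm_gram_sq_of_pairwise_orthogonal orth

end RowCombination

section CommutatorRowCombination

variable {𝕜 n κ μ : Type*} [RCLike 𝕜] [Fintype n] [Fintype κ]

theorem norm_lie_comm (A B : Matrix n n 𝕜) : ‖⁅A, B⁆‖ = ‖⁅B, A⁆‖ := by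
  rw [Ring.lie_def, Ring.lie_def, norm_sub_rev]

theorem lie_rowCombination_left (Q : Matrix μ κ 𝕜) (A : κ → Matrix n n 𝕜) (k : μ)
    (Y : Matrix n n 𝕜) :
    ⁅rowCombination Q A k, Y⁆ = rowCombination Q (fun i => ⁅A i, Y⁆) k := by
  simp only [rowCombination, Ring.lie_def, Matrix.sum_mul, Matrix.mul_sum, Matrix.smul_mul,
    Matrix.mul_smul, smul_sub, Finset.sum_sub_distrib]

theorem isSymm_rowCombination {Q : Matrix μ κ 𝕜} {A : κ → Matrix n n 𝕜}
    (hA : ∀ i, (A i).IsSymm) (k : μ) : (rowCombination Q A k).IsSymm := by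
  simp only [rowCombination, IsSymm, transpose_sum, transpose_smul, (hA _).eq]

theorem sum_norm_lie_rowCombination_sq [Fintype μ] [DecidableEq κ] {Q : Matrix μ κ 𝕜}
    (hQ : Qᴴ * Q = 1) (A : κ → Matrix n n 𝕜) :
    ∑ k, ∑ l, ‖⁅rowCombination Q A k, rowCombination Q A l⁆‖ ^ 2 =
      ∑ i, ∑ j, ‖⁅A i, A j⁆‖ ^ 2 := by
  have rotate_left (Y : Matrix n n 𝕜) :
      ∑ k, ‖⁅rowCombination Q A k, Y⁆‖ ^ 2 = ∑ i, ‖⁅A i, Y⁆‖ ^ 2 := by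
    simp only [lie_rowCombination_left, sum_norm_rowCombination_sq hQ]
  have rotate_right (X : Matrix n n 𝕜) :
      ∑ l, ‖⁅X, rowCombination Q A l⁆‖ ^ 2 = ∑ j, ‖⁅X, A j⁆‖ ^ 2 := by
    simpa only [norm_lie_comm X] using rotate_left X
  simp only [rotate_right]
  rw [Finset.sum_comm]
  simp only [rotate_left]
  rw [Finset.sum_comm]

end CommutatorRowCombination

section Lu

variable {n κ : Type*} [Fintype n] [Fintype κ] {B : κ → Matrix n n ℝ} {M : ℝ}

theorem two_mul_sum_apply_sq_le (hB : ∀ k, (B k).IsSymm)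
    (orth : Pairwise fun k l => ⟪B k, B l⟫_ℝ = 0) (hM₀ : 0 ≤ M) (hM : ∀ k, ‖B k‖ ^ 2 ≤ M)
    {i j : n} (hij : i ≠ j) : 2 * ∑ k, B k i j ^ 2 ≤ M := by
  classical
  let X : Matrix n n ℝ := Matrix.single i j 1 + Matrix.single j i 1
  have inner_X {Y : Matrix n n ℝ} (hY : Y.IsSymm) : ⟪Y, X⟫_ℝ = 2 * Y i j := by
    simp [X, inner_add_right, frobenius_inner_single, hY.apply i j, two_mul]
  have symm_X : X.IsSymm := by simp [X, IsSymm, add_comm]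
  have norm_X : ‖X‖ ^ 2 = 2 := by
    rw [← real_inner_self_eq_norm_sq, inner_X symm_X]
    simp [X, hij.symm]
  have bessel := sum_norm_inner_sq_le_of_pairwise_orthogonal hM₀ orth hM X
  simp only [inner_X (hB _), norm_X, Real.norm_eq_abs, sq_abs, mul_pow, ← Finset.mul_sum] at bessel
  linarith

theorem sum_norm_lie_diagonal_sq_le [DecidableEq n] (hB : ∀ k, (B k).IsSymm)
    (orth : Pairwise fun k l => ⟪B k, B l⟫_ℝ = 0) (hM₀ : 0 ≤ M) (hM : ∀ k, ‖B k‖ ^ 2 ≤ M)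
    (x : n → ℝ) :
    ∑ k, ‖⁅diagonal x, B k⁆‖ ^ 2 ≤ ‖diagonal x‖ ^ 2 * (∑ k, ‖B k‖ ^ 2 + M) := by
  set s := ‖diagonal x‖ ^ 2 with hs
  have sum_eq (w : n → n → ℝ) : ∑ k, ∑ i, ∑ j, w i j * ‖B k i j‖ ^ 2 =
      ∑ i, ∑ j, w i j * ∑ k, B k i j ^ 2 := by
    rw [Finset.sum_comm]
    refine Finset.sum_congr rfl fun i _ => ?_
    rw [Finset.sum_comm]
    simp only [Finset.mul_sum, Real.norm_eq_abs, sq_abs]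
  have entrywise (i j : n) : (‖x i - x j‖ ^ 2 - s) * ∑ k, B k i j ^ 2 ≤
      max (‖x i - x j‖ ^ 2 - s) 0 * (M / 2) := by
    rcases eq_or_ne i j with rfl | hij
    · calc
        _ ≤ 0 := by simpa using show 0 ≤ s * ∑ k, B k i i ^ 2 by positivity
        _ ≤ max (‖x i - x i‖ ^ 2 - s) 0 * (M / 2) := by positivity
    · calc
        _ ≤ max (‖x i - x j‖ ^ 2 - s) 0 * ∑ k, B k i j ^ 2 := by
          gcongr; exact le_max_left _ _
        _ ≤ max (‖x i - x j‖ ^ 2 - s) 0 * (M / 2) := by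
          gcongr; linarith [two_mul_sum_apply_sq_le hB orth hM₀ hM hij]
  have excess : ∑ k, ‖⁅diagonal x, B k⁆‖ ^ 2 - s * ∑ k, ‖B k‖ ^ 2 ≤ s * M := calc
    _ = ∑ i, ∑ j, (‖x i - x j‖ ^ 2 - s) * ∑ k, B k i j ^ 2 := by
      rw [← sum_eq]
      simp only [frobenius_norm_sq_lie_diagonal, frobenius_norm_sq_eq_sum (B _), sub_mul,
        Finset.sum_sub_distrib, Finset.mul_sum]
    _ ≤ ∑ i, ∑ j, max (‖x i - x j‖ ^ 2 - s) 0 * (M / 2) :=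
      Finset.sum_le_sum fun i _ => Finset.sum_le_sum fun j _ => entrywise i j
    _ = (∑ i, ∑ j, max (‖x i - x j‖ ^ 2 - s) 0) * (M / 2) := by simp only [Finset.sum_mul]
    _ ≤ 2 * s * (M / 2) := by
      gcongr
      rw [hs, frobenius_norm_diagonal]
      exact sum_max_norm_sub_sq_sub_le (WithLp.toLp 2 x)
    _ = s * M := by ring
  linarith

theorem sum_norm_lie_sq_le {A : Matrix n n ℝ} (hA : A.IsSymm) (hB : ∀ k, (B k).IsSymm)
    (orth : Pairwise fun k l => ⟪B k, B l⟫_ℝ = 0) (hM₀ : 0 ≤ M) (hM : ∀ k, ‖B k‖ ^ 2 ≤ M) :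
    ∑ k, ‖⁅A, B k⁆‖ ^ 2 ≤ ‖A‖ ^ 2 * (∑ k, ‖B k‖ ^ 2 + M) := by
  classical
  have hA' : A.IsHermitian := isHermitian_iff_isSymm.2 hA
  let φ := Unitary.conjStarAlgAut ℝ _ (star hA'.eigenvectorUnitary)
  let Q : Matrix n n ℝ := ↑(star hA'.eigenvectorUnitary)
  have isometry : Qᴴ * Q = 1 := Unitary.coe_star_mul_self (star hA'.eigenvectorUnitary)
  have diag : φ A = diagonal hA'.eigenvalues := hA'.conjStarAlgAut_star_eigenvectorUnitary
  have norm_map (X : Matrix n n ℝ) : ‖φ X‖ = ‖X‖ :=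
    frobenius_norm_mul_mul_conjTranspose_of_isometry isometry X
  have map_lie (X Y : Matrix n n ℝ) : ⁅φ X, φ Y⁆ = φ ⁅X, Y⁆ := by
    simp only [Ring.lie_def, map_sub, map_mul]
  have symm_map (k : κ) : (φ (B k)).IsSymm := by
    have := (isHermitian_iff_isSymm.2 (hB k)).isSelfAdjoint.map φ
    exact isHermitian_iff_isSymm.1 this
  have := sum_norm_lie_diagonal_sq_le symm_map
    (fun k l hkl =>
      (frobenius_inner_mul_mul_conjTranspose_of_isometry isometry _ _).trans (orth hkl)) hM₀
    (fun k => by rw [norm_map]; exact hM k) hA'.eigenvalues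
  simpa only [← diag, map_lie, norm_map] using this

end Lu

section LiLi

variable {κ : Type*} [Fintype κ]

/- For a single index the supremum runs over an empty type and is `0`. -/
theorem sum_mul_iSup_ne_le {a : κ → ℝ} (ha : ∀ i, 0 ≤ a i) :
    ∑ i, a i * ⨆ j : {j // j ≠ i}, a j ≤ (∑ i, a i) ^ 2 / 2 := by
  classical
  rcases isEmpty_or_nonempty κ with _ | _
  · simp
  obtain ⟨p, hp⟩ := Finite.exists_max a
  set R := ∑ j : {j // j ≠ p}, a j
  have sum_split : ∑ i, a i = a p + R := Fintype.sum_eq_add_sum_subtype_ne a p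
  have iSup_p : ⨆ j : {j // j ≠ p}, a j ≤ R :=
    Real.iSup_le (fun j => Finset.single_le_sum (f := fun j : {j // j ≠ p} => a j)
      (fun j _ => ha j) (Finset.mem_univ j)) (Finset.sum_nonneg fun j _ => ha j)
  have iSup_le (i : κ) : ⨆ j : {j // j ≠ i}, a j ≤ a p := Real.iSup_le (fun j => hp j) (ha p)
  calc ∑ i, a i * ⨆ j : {j // j ≠ i}, a j
      = a p * (⨆ j : {j // j ≠ p}, a j) +
          ∑ i : {i // i ≠ p}, a i * ⨆ j : {j // j ≠ i.1}, a j :=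
        Fintype.sum_eq_add_sum_subtype_ne _ p
    _ ≤ a p * R + ∑ i : {i // i ≠ p}, a i * a p := by
        gcongr with i
        exacts [ha p, ha i, iSup_le i]
    _ = 2 * (a p * R) := by rw [← Finset.sum_mul]; ring
    _ ≤ (∑ i, a i) ^ 2 / 2 := by
        rw [sum_split]
        linarith [four_mul_le_sq_add (a p) R]

variable {n : Type*} [Fintype n]

theorem sum_norm_lie_sq_le_of_pairwise_orthogonal {B : κ → Matrix n n ℝ}
    (hB : ∀ k, (B k).IsSymm) (orth : Pairwise fun k l => ⟪B k, B l⟫_ℝ = 0) :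
    ∑ k, ∑ l, ‖⁅B k, B l⁆‖ ^ 2 ≤ 3 / 2 * (∑ k, ‖B k‖ ^ 2) ^ 2 - ∑ k, ‖B k‖ ^ 4 := by
  classical
  set S := ∑ k, ‖B k‖ ^ 2
  let M (k : κ) : ℝ := ⨆ l : {l // l ≠ k}, ‖B l‖ ^ 2
  have sum_ne (k : κ) : ∑ l : {l // l ≠ k}, ‖B l‖ ^ 2 = S - ‖B k‖ ^ 2 :=
    eq_sub_of_add_eq' (Fintype.sum_eq_add_sum_subtype_ne (fun l => ‖B l‖ ^ 2) k).symm
  have lu (k : κ) : ∑ l, ‖⁅B k, B l⁆‖ ^ 2 ≤ ‖B k‖ ^ 2 * (S - ‖B k‖ ^ 2 + M k) := calc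
    ∑ l, ‖⁅B k, B l⁆‖ ^ 2 = ∑ l : {l // l ≠ k}, ‖⁅B k, B l⁆‖ ^ 2 := by
      simp [Fintype.sum_eq_add_sum_subtype_ne _ k, Ring.lie_def (B k) (B k)]
    _ ≤ ‖B k‖ ^ 2 * (∑ l : {l // l ≠ k}, ‖B l‖ ^ 2 + M k) :=
      sum_norm_lie_sq_le (hB k) (fun l => hB l) (orth.comp_of_injective Subtype.val_injective)
        (Real.iSup_nonneg fun l => by positivity)
        (le_ciSup (f := fun l : {l // l ≠ k} => ‖B l‖ ^ 2) (Set.finite_range _).bddAbove)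
    _ = ‖B k‖ ^ 2 * (S - ‖B k‖ ^ 2 + M k) := by rw [sum_ne]
  calc ∑ k, ∑ l, ‖⁅B k, B l⁆‖ ^ 2
      ≤ ∑ k, ‖B k‖ ^ 2 * (S - ‖B k‖ ^ 2 + M k) := Finset.sum_le_sum fun k _ => lu k
    _ = S ^ 2 - ∑ k, ‖B k‖ ^ 4 + ∑ k, ‖B k‖ ^ 2 * M k := by
        rw [sq S, Finset.sum_mul, ← Finset.sum_sub_distrib, ← Finset.sum_add_distrib]
        exact Finset.sum_congr rfl fun k _ => by ring
    _ ≤ 3 / 2 * S ^ 2 - ∑ k, ‖B k‖ ^ 4 := by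
        linarith [sum_mul_iSup_ne_le fun k => sq_nonneg ‖B k‖]

theorem li_li_inequality_general (A : κ → Matrix n n ℝ) (hA : ∀ i, (A i).IsSymm) :
    ∑ i, ∑ j, ‖⁅A i, A j⁆‖ ^ 2 ≤ 3 / 2 * (∑ i, ‖A i‖ ^ 2) ^ 2 - ∑ i, ‖A i‖ ^ 4 := by
  classical
  obtain ⟨Q, hQ, orth⟩ := exists_isometry_pairwise_orthogonal_rowCombination ℝ A
  have := sum_norm_lie_sq_le_of_pairwise_orthogonal (isSymm_rowCombination hA) orth
  rw [sum_norm_lie_rowCombination_sq hQ, sum_norm_rowCombination_sq hQ] at this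
  linarith [sum_norm_pow_four_le_of_pairwise_orthogonal_rowCombination hQ orth]

end LiLi

theorem two_mul_sum_sum_ite_lt {ι R : Type*} [Fintype ι] [LinearOrder ι] [NonAssocSemiring R]
    {f : ι → ι → R} (symm : ∀ i j, f i j = f j i) (diag : ∀ i, f i i = 0) :
    2 * ∑ i, ∑ j, (if i < j then f i j else 0) = ∑ i, ∑ j, f i j := by
  have lower_eq_upper : ∑ i, ∑ j, (if j < i then f i j else 0) =
      ∑ i, ∑ j, (if i < j then f i j else 0) := by
    rw [Finset.sum_comm]
    exact Finset.sum_congr rfl fun i _ => Finset.sum_congr rfl fun j _ => by rw [symm]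
  have split (i j : ι) :
      f i j = (if i < j then f i j else 0) + (if j < i then f i j else 0) := by
    rcases lt_trichotomy i j with h | rfl | h <;> simp [*, not_lt_of_gt]
  calc 2 * ∑ i, ∑ j, (if i < j then f i j else 0)
      = ∑ i, ∑ j, ((if i < j then f i j else 0) + (if j < i then f i j else 0)) := by
        simp only [Finset.sum_add_distrib, lower_eq_upper, two_mul]
    _ = ∑ i, ∑ j, f i j := by simp only [← split]

theorem frobSq_eq_norm_sq {n : ℕ} (A : Matrix (Fin n) (Fin n) ℝ) : frobSq A = ‖A‖ ^ 2 := by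
  simp [frobSq, frobenius_norm_sq_eq_sum]

theorem mcomm_eq_lie {n : ℕ} (A B : Matrix (Fin n) (Fin n) ℝ) : mcomm A B = ⁅A, B⁆ := rfl

/-- The Li–Li inequality P′(n,m): for real symmetric `n × n` matrices `A₁, …, A_m`,
`2 Σ_{i<j} ‖[A_i,A_j]‖² ≤ (3/2)(Σ_i ‖A_i‖²)² − Σ_i ‖A_i‖⁴`. -/
theorem li_li_inequality (n m : ℕ) (A : Fin m → Matrix (Fin n) (Fin n) ℝ)
    (hA : ∀ i, (A i).IsSymm) :
    2 * ∑ i, ∑ j, (if i < j then frobSq (mcomm (A i) (A j)) else 0) ≤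
      (3 / 2) * (∑ i, frobSq (A i)) ^ 2 - ∑ i, (frobSq (A i)) ^ 2 := by
  simp only [frobSq_eq_norm_sq, mcomm_eq_lie, ← pow_mul]
  rw [two_mul_sum_sum_ite_lt (fun i j => by rw [norm_lie_comm])
    (fun i => by simp [Ring.lie_def])]
  exact li_li_inequality_general A hA
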